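/- arXiv:math/0604412 — 3 statements merged into one kernel-verified Lean document; each statement's English description precedes it below -/
import Mathlib

section
/- Let h : 𝒯 → 𝒜 be a homology theory that reflects isomorphisms, is full, and satisfies: for any short exact sequence 0 → x → y → z → 0 in 𝒜 with x ≅ h(X) and z ≅ h(Z) for some objects X, Z of 𝒯, there is an object Y of 𝒯 with h(Y) ≅ y. Then for all objects X, Y of 𝒯 there is a short exact sequence of abelian groups 0 → Ext¹_𝒜(h(X)[1], h(Y)) → Hom_𝒯(X,Y) → Hom_𝒜(h(X), h(Y)) → 0, where the right-hand map is f ↦ h(f); that is, f ↦ h(f) is a surjective group homomorphism whose kernel is isomorphic to Ext¹_𝒜(h(X)[1], h(Y)). -/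
open CategoryTheory Category Limits Pretriangulated

universe w

variable {T : Type*} [Category T] [HasZeroObject T] [Preadditive T] [HasShift T ℤ]
  [∀ n : ℤ, (shiftFunctor T n).Additive] [Pretriangulated T]
variable {A : Type*} [Category A] [Abelian A] [HasShift A ℤ]
  [∀ n : ℤ, (shiftFunctor A n).Additive]

/-- The group homomorphism `Hom_𝒯(X,Y) →+ Hom_𝒜(h(X),h(Y))`, `f ↦ h(f)`. -/
def homologyMapHom (h : T ⥤ A) [h.Additive] (X Y : T) :
    (X ⟶ Y) →+ (h.obj X ⟶ h.obj Y) :=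
  AddMonoidHom.mk' (fun f => h.map f) (fun _ _ => h.map_add)


open DerivedCategory in
/-- Every class in `Ext¹` is the class of a short exact sequence. -/
theorem exists_extClass_eq {C : Type*} [Category C] [Abelian C] [HasExt.{w} C] {Z Y : C}
    (x : Abelian.Ext Z Y 1) :
    ∃ (E : C) (i : Y ⟶ E) (p : E ⟶ Z) (hip : i ≫ p = 0)
      (hS : (ShortComplex.mk i p hip).ShortExact), hS.extClass = x := by
  let := HasDerivedCategory.standard C
  let F := singleFunctor C 0
  let φ : F.obj Z ⟶ (F.obj Y)⟦(1 : ℤ)⟧ := x.hom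
  obtain ⟨K, f, g, hT⟩ := distinguished_cocone_triangle₂ φ
  have hz : ∀ n : ℤ, n ≠ 0 → ∀ W : C, IsZero ((homologyFunctor C n).obj (F.obj W)) := by
    intro n hn W
    rcases lt_or_gt_of_ne hn with h | h
    · exact isZero_of_isGE _ 0 n h
    · exact isZero_of_isLE _ 0 n h
  have hK : ∀ n : ℤ, n ≠ 0 → IsZero ((homologyFunctor C n).obj K) := fun n hn =>
    (HomologySequence.exact₂ _ hT n).isZero_of_both_zeros
      ((hz n hn Y).eq_of_src _ _) ((hz n hn Z).eq_of_tgt _ _)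
  have : K.IsGE 0 := (isGE_iff _ _).2 fun i hi => hK i hi.ne
  have : K.IsLE 0 := (isLE_iff _ _).2 fun i hi => hK i hi.ne'
  obtain ⟨E, ⟨e⟩⟩ := exists_iso_singleFunctor_obj_of_isGE_of_isLE K 0
  obtain ⟨i, hi⟩ := F.map_surjective (f ≫ e.hom)
  obtain ⟨p, hp⟩ := F.map_surjective (e.inv ≫ g)
  have hT' : Triangle.mk (F.map i) (F.map p) φ ∈ distTriang (DerivedCategory C) :=
    isomorphic_distinguished _ hT _
      (Triangle.isoMk _ _ (Iso.refl _) e.symm (Iso.refl _) (by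
          change F.map i ≫ e.inv = 𝟙 _ ≫ f
          rw [hi, assoc, e.hom_inv_id, comp_id, id_comp]) (by
          change F.map p ≫ 𝟙 _ = e.inv ≫ g
          rw [hp, comp_id]) (by
          change φ ≫ (𝟙 _)⟦1⟧' = 𝟙 _ ≫ φ
          rw [CategoryTheory.Functor.map_id, comp_id, id_comp]))
  have hip : i ≫ p = 0 := F.map_injective (by
    simpa using! comp_distTriang_mor_zero₁₂ _ hT')
  let S := ShortComplex.mk i p hip
  let ε := singleFunctorCompHomologyFunctorIso C 0
  have hex : S.Exact := by
    refine ShortComplex.exact_of_iso ?_ (HomologySequence.exact₂ _ hT' 0)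
    exact ShortComplex.isoMk (ε.app _) (ε.app _) (ε.app _) (ε.hom.naturality i).symm
      (ε.hom.naturality p).symm
  have hm : Mono i := by
    have : Mono ((homologyFunctor C 0).map (F.map i)) :=
      (HomologySequence.mono_homologyMap_mor₁_iff _ hT' (-1) 0).2
        ((hz (-1) (by simp) Z).eq_of_src _ _)
    have h2 : i = ε.inv.app _ ≫ (homologyFunctor C 0).map (F.map i) ≫ ε.hom.app _ :=
      (NatIso.naturality_1 ε i).symm
    rw [h2]
    infer_instance
  have hep : Epi p := by
    have : Epi ((homologyFunctor C 0).map (F.map p)) :=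
      (HomologySequence.epi_homologyMap_mor₂_iff _ hT' 0 1).2
        ((hz 1 (by simp) Y).eq_of_tgt _ _)
    have h2 : p = ε.inv.app _ ≫ (homologyFunctor C 0).map (F.map p) ≫ ε.hom.app _ :=
      (NatIso.naturality_1 ε p).symm
    rw [h2]
    infer_instance
  have hS : S.ShortExact := ShortComplex.ShortExact.mk' hex hm hep
  refine ⟨E, i, p, hip, hS, ?_⟩
  ext
  rw [hS.extClass_hom]
  obtain ⟨c, hc₁, hc₂⟩ := complete_distinguished_triangle_morphism _ _
    hS.singleTriangle_distinguished hT' (𝟙 _) (𝟙 _) (by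
      change F.map i ≫ 𝟙 _ = 𝟙 _ ≫ F.map i
      rw [comp_id, id_comp])
  obtain ⟨c', rfl⟩ := F.map_surjective c
  have hc' : c' = 𝟙 _ := by
    rw [← cancel_epi p]
    apply F.map_injective
    change F.map p ≫ F.map c' = 𝟙 _ ≫ F.map p at hc₁
    rw [id_comp] at hc₁
    rw [F.map_comp, hc₁]
    exact congrArg F.map (comp_id p).symm
  subst hc'
  change hS.singleδ ≫ (𝟙 _)⟦1⟧' = F.map (𝟙 _) ≫ φ at hc₂
  rw [CategoryTheory.Functor.map_id, CategoryTheory.Functor.map_id, comp_id, id_comp] at hc₂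
  exact hc₂

section UCT

set_option linter.unusedSectionVars false

variable (h : T ⥤ A)

theorem uct_shift_map_eq_zero_iff [h.Additive] [h.CommShift ℤ] {X Y : T} (f : X ⟶ Y) :
    h.map (f⟦(1 : ℤ)⟧') = 0 ↔ h.map f = 0 := by
  have e := (h.commShiftIso (1 : ℤ)).hom.naturality f
  dsimp at e
  constructor
  · intro hf
    rw [hf, zero_comp] at e
    have : (h.map f)⟦(1 : ℤ)⟧' = 0 := by
      rw [← cancel_epi ((h.commShiftIso (1 : ℤ)).hom.app X), ← e, comp_zero]
    exact (shiftFunctor A (1 : ℤ)).map_injective (by rw [this, Functor.map_zero])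
  · intro hf
    rw [hf, Functor.map_zero, comp_zero] at e
    rw [← cancel_mono ((h.commShiftIso (1 : ℤ)).hom.app Y), e, zero_comp]

theorem uct_mono_shift_map_iff [h.CommShift ℤ] {X Y : T} (f : X ⟶ Y) :
    Mono (h.map (f⟦(1 : ℤ)⟧')) ↔ Mono (h.map f) := by
  have e : h.map (f⟦(1 : ℤ)⟧') = (h.commShiftIso (1 : ℤ)).hom.app X ≫ (h.map f)⟦(1 : ℤ)⟧' ≫
      (h.commShiftIso (1 : ℤ)).inv.app Y :=
    (NatIso.naturality_2 (h.commShiftIso (1 : ℤ)) f).symm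
  constructor
  · intro hf
    have : (h.map f)⟦(1 : ℤ)⟧' = (h.commShiftIso (1 : ℤ)).inv.app X ≫ h.map (f⟦(1 : ℤ)⟧') ≫
        (h.commShiftIso (1 : ℤ)).hom.app Y :=
      (NatIso.naturality_1 (h.commShiftIso (1 : ℤ)) f).symm
    have : Mono ((h.map f)⟦(1 : ℤ)⟧') := by
      rw [this]
      infer_instance
    exact (shiftFunctor A (1 : ℤ)).mono_of_mono_map this
  · intro hf
    rw [e]
    infer_instance

variable [h.Additive] [h.CommShift ℤ] [h.IsHomological]

theorem uct_epi_iff {X Y Z : T} {f : X ⟶ Y} {g : Y ⟶ Z} {w : Z ⟶ X⟦(1 : ℤ)⟧}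
    (hT : Triangle.mk f g w ∈ distTriang T) : Epi (h.map g) ↔ h.map w = 0 :=
  (h.map_distinguished_exact _ (rot_of_distTriang _ hT)).epi_f_iff

theorem uct_mono_iff {X Y Z : T} {f : X ⟶ Y} {g : Y ⟶ Z} {w : Z ⟶ X⟦(1 : ℤ)⟧}
    (hT : Triangle.mk f g w ∈ distTriang T) : Mono (h.map f) ↔ h.map w = 0 := by
  have key : Mono (h.map (-f⟦(1 : ℤ)⟧')) ↔ h.map w = 0 :=
    (h.map_distinguished_exact _ (rot_of_distTriang _ (rot_of_distTriang _ hT))).mono_g_iff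
  rw [← key, ← uct_mono_shift_map_iff, h.map_neg]
  constructor
  · intro
    infer_instance
  · intro hm
    rw [← neg_neg (h.map (f⟦(1 : ℤ)⟧'))]
    infer_instance

variable [HasExt.{w} A]

/-- `x` is the class of the extension obtained from a distinguished triangle with third map `w`. -/
def UctCls {Z Y : T} (w : Z ⟶ Y⟦(1 : ℤ)⟧) (x : Abelian.Ext (h.obj Z) (h.obj Y) 1) : Prop :=
  ∃ (C : T) (f : Y ⟶ C) (g : C ⟶ Z) (_ : Triangle.mk f g w ∈ distTriang T)
    (hz : h.map f ≫ h.map g = 0) (hS : (ShortComplex.mk (h.map f) (h.map g) hz).ShortExact),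
    hS.extClass = x

theorem UctCls.map_eq_zero {Z Y : T} {w : Z ⟶ Y⟦(1 : ℤ)⟧}
    {x : Abelian.Ext (h.obj Z) (h.obj Y) 1} (hx : UctCls h w x) : h.map w = 0 := by
  obtain ⟨C, f, g, hT, hz, hS, rfl⟩ := hx
  exact (uct_epi_iff h hT).1 hS.epi_g

theorem uct_exists_cls {Z Y : T} (w : Z ⟶ Y⟦(1 : ℤ)⟧) (hw : h.map w = 0) :
    ∃ x, UctCls h w x := by
  obtain ⟨C, f, g, hT⟩ := distinguished_cocone_triangle₂ w
  have hz : h.map f ≫ h.map g = 0 := by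
    have : f ≫ g = 0 := comp_distTriang_mor_zero₁₂ _ hT
    rw [← h.map_comp, this, h.map_zero]
  exact ⟨_, C, f, g, hT, hz, ShortComplex.ShortExact.mk' (h.map_distinguished_exact _ hT)
    ((uct_mono_iff h hT).2 hw) ((uct_epi_iff h hT).2 hw), rfl⟩

theorem UctCls.naturality {Z Z' Y : T} {w : Z ⟶ Y⟦(1 : ℤ)⟧} {w' : Z' ⟶ Y⟦(1 : ℤ)⟧}
    {x : Abelian.Ext (h.obj Z) (h.obj Y) 1} {x' : Abelian.Ext (h.obj Z') (h.obj Y) 1}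
    (hx : UctCls h w x) (hx' : UctCls h w' x') (a : Z ⟶ Z') (ha : w = a ≫ w') :
    x = (Abelian.Ext.mk₀ (h.map a)).comp x' (zero_add 1) := by
  obtain ⟨C, f, g, hT, hz, hS, rfl⟩ := hx
  obtain ⟨C', f', g', hT', hz', hS', rfl⟩ := hx'
  obtain ⟨b, hb₁, hb₂⟩ : ∃ b : C ⟶ C', f ≫ b = 𝟙 Y ≫ f' ∧ g ≫ a = b ≫ g' :=
    complete_distinguished_triangle_morphism₂ _ _ hT hT' (𝟙 Y) a (by
      change w ≫ (𝟙 Y)⟦(1 : ℤ)⟧' = a ≫ w'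
      rw [CategoryTheory.Functor.map_id, comp_id, ha])
  rw [id_comp] at hb₁
  have := ShortComplex.ShortExact.extClass_naturality hS hS'
    { τ₁ := 𝟙 (h.obj Y), τ₂ := h.map b, τ₃ := h.map a
      comm₁₂ := by
        dsimp
        rw [id_comp, ← h.map_comp, hb₁]
      comm₂₃ := by
        dsimp
        rw [← h.map_comp, ← h.map_comp, hb₂] }
  rw [← this]
  exact (Abelian.Ext.comp_mk₀_id _).symm

theorem UctCls.unique {Z Y : T} {w : Z ⟶ Y⟦(1 : ℤ)⟧}
    {x x' : Abelian.Ext (h.obj Z) (h.obj Y) 1}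
    (hx : UctCls h w x) (hx' : UctCls h w x') : x = x' := by
  rw [hx.naturality h hx' (𝟙 _) (id_comp _).symm, h.map_id, Abelian.Ext.mk₀_id_comp]

theorem UctCls.add {Z Y : T} {w₁ w₂ : Z ⟶ Y⟦(1 : ℤ)⟧}
    {x₁ x₂ x₃ : Abelian.Ext (h.obj Z) (h.obj Y) 1}
    (h₁ : UctCls h w₁ x₁) (h₂ : UctCls h w₂ x₂) (h₃ : UctCls h (w₁ + w₂) x₃) :
    x₃ = x₁ + x₂ := by
  obtain ⟨x, hx⟩ := uct_exists_cls h (biprod.desc w₁ w₂) (by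
    rw [biprod.desc_eq, h.map_add, h.map_comp, h.map_comp, h₁.map_eq_zero, h₂.map_eq_zero,
      comp_zero, comp_zero, add_zero])
  rw [h₁.naturality h hx biprod.inl (by simp), h₂.naturality h hx biprod.inr (by simp),
    h₃.naturality h hx (biprod.inl + biprod.inr) (by simp), h.map_add, Abelian.Ext.mk₀_add,
    Abelian.Ext.add_comp]

theorem UctCls.eq_zero [h.ReflectsIsomorphisms] [h.Full] {Z Y : T} {w : Z ⟶ Y⟦(1 : ℤ)⟧}
    (hw : UctCls h w 0) : w = 0 := by
  obtain ⟨C, f, g, hT, hz, hS, h0⟩ := hw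
  obtain ⟨r, hr⟩ := Abelian.Ext.contravariant_sequence_exact₁ hS (h.obj Y)
    (Abelian.Ext.mk₀ (𝟙 (h.obj Y))) (add_zero 1) (by
      rw [h0]
      simp)
  obtain ⟨r, rfl⟩ := (Abelian.Ext.mk₀_bijective _ _).2 r
  obtain ⟨r, rfl⟩ := h.map_surjective r
  rw [Abelian.Ext.mk₀_comp_mk₀] at hr
  replace hr := (Abelian.Ext.mk₀_bijective _ _).1 hr
  dsimp at hr
  rw [← h.map_comp] at hr
  have h1 : IsIso (h.map (f ≫ r)) := by
    rw [hr]
    infer_instance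
  have h2 : IsIso (f ≫ r) := isIso_of_reflects_iso (f ≫ r) h
  have h3 : w ≫ f⟦(1 : ℤ)⟧' = 0 := comp_distTriang_mor_zero₃₁ _ hT
  rw [← cancel_mono ((f ≫ r)⟦(1 : ℤ)⟧'), Functor.map_comp, reassoc_of% h3, zero_comp, zero_comp]

theorem uct_exists_of_cls [h.ReflectsIsomorphisms] [h.Full]
    (hiii : ∀ S : ShortComplex A, S.ShortExact →
      (∃ X : T, Nonempty (S.X₁ ≅ h.obj X)) → (∃ Z : T, Nonempty (S.X₃ ≅ h.obj Z)) →
      ∃ Y : T, Nonempty (S.X₂ ≅ h.obj Y)) {Z Y : T}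
    (x : Abelian.Ext (h.obj Z) (h.obj Y) 1) : ∃ w : Z ⟶ Y⟦(1 : ℤ)⟧, UctCls h w x := by
  obtain ⟨E, i, p, hip, hS, rfl⟩ := exists_extClass_eq x
  obtain ⟨C, ⟨e⟩⟩ := hiii _ hS ⟨Y, ⟨Iso.refl _⟩⟩ ⟨Z, ⟨Iso.refl _⟩⟩
  dsimp at e
  obtain ⟨f, hf⟩ := h.map_surjective (i ≫ e.hom)
  obtain ⟨q, hq⟩ := h.map_surjective (e.inv ≫ p)
  have hmi : Mono i := hS.mono_f
  have hep : Epi p := hS.epi_g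
  have hfq : h.map f ≫ h.map q = 0 := by
    rw [hf, hq, assoc, e.hom_inv_id_assoc, hip]
  have hmf : Mono (h.map f) := by
    rw [hf]
    infer_instance
  have heq : Epi (h.map q) := by
    rw [hq]
    infer_instance
  let φ : ShortComplex.mk i p hip ≅ ShortComplex.mk (h.map f) (h.map q) hfq :=
    ShortComplex.isoMk (Iso.refl _) e (Iso.refl _) (by simp [hf]) (by simp [hq])
  have hS' : (ShortComplex.mk (h.map f) (h.map q) hfq).ShortExact :=
    ShortComplex.shortExact_of_iso φ hS
  obtain ⟨Z', g, w, hT⟩ := distinguished_cocone_triangle f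
  have hw : h.map w = 0 := (uct_mono_iff h hT).1 hmf
  have heg : Epi (h.map g) := (uct_epi_iff h hT).2 hw
  have hfg : h.map f ≫ h.map g = 0 := by
    have : f ≫ g = 0 := comp_distTriang_mor_zero₁₂ _ hT
    rw [← h.map_comp, this, h.map_zero]
  have hex : (ShortComplex.mk (h.map f) (h.map g) hfg).Exact := h.map_distinguished_exact _ hT
  obtain ⟨a, ha⟩ : ∃ a : h.obj Z' ⟶ h.obj Z, h.map g ≫ a = h.map q :=
    ⟨hex.desc (h.map q) hfq, hex.g_desc _ _⟩
  obtain ⟨b, hb⟩ : ∃ b : h.obj Z ⟶ h.obj Z', h.map q ≫ b = h.map g :=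
    ⟨hS'.exact.desc (h.map g) hfg, hS'.exact.g_desc _ _⟩
  have hab : a ≫ b = 𝟙 _ := by
    rw [← cancel_epi (h.map g), reassoc_of% ha, hb, comp_id]
  have hba : b ≫ a = 𝟙 _ := by
    rw [← cancel_epi (h.map q), reassoc_of% hb, ha, comp_id]
  obtain ⟨c, hc⟩ := h.map_surjective a
  have hci : IsIso (h.map c) := by
    rw [hc]
    exact ⟨b, hab, hba⟩
  have hci' : IsIso c := isIso_of_reflects_iso c h
  have hT' : Triangle.mk f (g ≫ c) (inv c ≫ w) ∈ distTriang T :=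
    isomorphic_distinguished _ hT _
      (Triangle.isoMk _ _ (Iso.refl _) (Iso.refl _) (asIso c).symm (by
        change f ≫ 𝟙 _ = 𝟙 _ ≫ f
        rw [comp_id, id_comp]) (by
        change (g ≫ c) ≫ inv c = 𝟙 _ ≫ g
        rw [assoc, IsIso.hom_inv_id, comp_id, id_comp]) (by
        change (inv c ≫ w) ≫ (𝟙 _)⟦(1 : ℤ)⟧' = inv c ≫ w
        rw [CategoryTheory.Functor.map_id, comp_id]))
  have hgc : h.map (g ≫ c) = h.map q := by rw [h.map_comp, hc, ha]
  have hz : h.map f ≫ h.map (g ≫ c) = 0 := by rw [hgc, hfq]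
  let ψ : ShortComplex.mk i p hip ≅ ShortComplex.mk (h.map f) (h.map (g ≫ c)) hz :=
    ShortComplex.isoMk (Iso.refl _) e (Iso.refl _) (by simp [hf])
      (by
        dsimp only
        rw [hgc]
        simp [hq])
  have hS'' := ShortComplex.shortExact_of_iso ψ hS
  refine ⟨inv c ≫ w, C, f, g ≫ c, hT', hz, hS'', ?_⟩
  have := ShortComplex.ShortExact.extClass_naturality hS hS'' ψ.hom
  change hS.extClass.comp (Abelian.Ext.mk₀ (𝟙 _)) _ =
    (Abelian.Ext.mk₀ (𝟙 _)).comp hS''.extClass _ at this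
  rw [Abelian.Ext.comp_mk₀_id, Abelian.Ext.mk₀_id_comp] at this
  exact this.symm

end UCT

/-- Let `h` be a homology theory that reflects isomorphisms, is full, and
realizes middle terms of extensions whose outer terms are realized.  Then for all `X, Y`
there is a short exact sequence of abelian groups
`0 ⟶ Ext¹(h(X)⟦1⟧, h(Y)) ⟶ Hom_𝒯(X,Y) ⟶ Hom_𝒜(h(X),h(Y)) ⟶ 0`
where the right-hand map is `f ↦ h(f)`: this map is a surjective group homomorphism whose
kernel is isomorphic to `Ext¹(h(X)⟦1⟧, h(Y))`. -/
theorem universal_coefficient_exact_sequence [HasExt.{w} A]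
    (h : T ⥤ A) [h.Additive] [h.CommShift ℤ] [h.IsHomological]
    [h.ReflectsIsomorphisms] [h.Full]
    (hiii : ∀ S : ShortComplex A, S.ShortExact →
      (∃ X : T, Nonempty (S.X₁ ≅ h.obj X)) → (∃ Z : T, Nonempty (S.X₃ ≅ h.obj Z)) →
      ∃ Y : T, Nonempty (S.X₂ ≅ h.obj Y))
    (X Y : T) :
    Function.Surjective (homologyMapHom h X Y) ∧
      Nonempty ((homologyMapHom h X Y).ker ≃+
        Abelian.Ext ((h.obj X)⟦(1:ℤ)⟧) (h.obj Y) 1) := by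
  refine ⟨fun g => h.map_surjective g, ?_⟩
  have hex : ∀ f : (homologyMapHom h X Y).ker, ∃ x, UctCls h (f.1⟦(1 : ℤ)⟧') x := fun f =>
    uct_exists_cls h _ ((uct_shift_map_eq_zero_iff h f.1).2 f.2)
  choose c hc using hex
  let ε := (h.commShiftIso (1 : ℤ)).app X
  let Φ : (homologyMapHom h X Y).ker →+ Abelian.Ext ((h.obj X)⟦(1:ℤ)⟧) (h.obj Y) 1 :=
    AddMonoidHom.mk' (fun f => (Abelian.Ext.mk₀ ε.inv).comp (c f) (zero_add 1)) (by
      intro f g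
      have : c (f + g) = c f + c g := by
        refine UctCls.add h (hc f) (hc g) ?_
        have := hc (f + g)
        rw [AddSubgroup.coe_add, Functor.map_add] at this
        exact this
      rw [this, Abelian.Ext.comp_add])
  have hε : ∀ y : Abelian.Ext (h.obj (X⟦(1 : ℤ)⟧)) (h.obj Y) 1,
      (Abelian.Ext.mk₀ ε.hom).comp ((Abelian.Ext.mk₀ ε.inv).comp y (zero_add 1)) (zero_add 1)
        = y := by
    intro y
    rw [Abelian.Ext.mk₀_comp_mk₀_assoc, ε.hom_inv_id]
    exact Abelian.Ext.mk₀_id_comp y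
  have hε' : ∀ y : Abelian.Ext ((h.obj X)⟦(1 : ℤ)⟧) (h.obj Y) 1,
      (Abelian.Ext.mk₀ ε.inv).comp ((Abelian.Ext.mk₀ ε.hom).comp y (zero_add 1)) (zero_add 1)
        = y := by
    intro y
    rw [Abelian.Ext.mk₀_comp_mk₀_assoc, ε.inv_hom_id]
    exact Abelian.Ext.mk₀_id_comp y
  refine ⟨AddEquiv.ofBijective Φ ⟨?_, ?_⟩⟩
  · rw [injective_iff_map_eq_zero]
    intro f hf
    have h0 : c f = 0 := by
      rw [← hε (c f)]
      change (Abelian.Ext.mk₀ ε.hom).comp (Φ f) (zero_add 1) = 0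
      rw [hf, Abelian.Ext.comp_zero]
    have h1 := hc f
    rw [h0] at h1
    apply Subtype.ext
    apply (shiftFunctor T (1 : ℤ)).map_injective
    rw [h1.eq_zero h]
    exact (Functor.map_zero _ _ _).symm
  · intro y
    obtain ⟨w, hw⟩ := uct_exists_of_cls h hiii
      ((Abelian.Ext.mk₀ ε.hom).comp y (zero_add 1))
    obtain ⟨f, rfl⟩ := (shiftFunctor T (1 : ℤ)).map_surjective w
    refine ⟨⟨f, (uct_shift_map_eq_zero_iff h f).1 hw.map_eq_zero⟩, ?_⟩
    change (Abelian.Ext.mk₀ ε.inv).comp (c _) (zero_add 1) = y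
    rw [UctCls.unique h (hc _) hw, hε']
end

section
/- Let h : 𝒯 → 𝒜 be a homology theory that reflects isomorphisms, is full, and is essentially surjective (for every object x of 𝒜 there is an object X of 𝒯 with h(X) ≅ x). Then 𝒜 is hereditary: for every exact sequence 0 → u →α v →β w →γ x → 0 in 𝒜 there exist an object z of 𝒜 and morphisms v → z, z → x, z → w such that 0 → v → z → x → 0 is a short exact sequence and the diagram with rows 0 → v → z → x → 0 and 0 → u →α v →β w →γ x → 0, vertical maps id_v : v → v, z → w, and id_x : x → x, commutes. Equivalently, Ext²_𝒜(x, y) = 0 for all objects x, y of 𝒜. -/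
open CategoryTheory Category Limits Pretriangulated

universe w

theorem part_one_aux
    {T : Type*} [Category T] [HasZeroObject T] [Preadditive T] [HasShift T ℤ]
    [∀ n : ℤ, (shiftFunctor T n).Additive] [Pretriangulated T]
    {A : Type*} [Category A] [Abelian A] [HasShift A ℤ]
    [∀ n : ℤ, (shiftFunctor A n).Additive]
    (h : T ⥤ A) [h.Additive] [h.CommShift ℤ] [h.IsHomological]
    [h.Full] [h.EssSurj]
    (v w x : A) (β : v ⟶ w) (γ : w ⟶ x) (hγ : Epi γ)
    (wβγ : β ≫ γ = 0) (hex : (ShortComplex.mk β γ wβγ).Exact) :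
    ∃ (z : A) (σ : v ⟶ z) (τ : z ⟶ x) (δ : z ⟶ w) (wστ : σ ≫ τ = 0),
      (ShortComplex.mk σ τ wστ).ShortExact ∧ σ ≫ δ = β ∧ δ ≫ γ = τ := by
  let iV := h.objObjPreimageIso v
  let iW := h.objObjPreimageIso w
  let iX := h.objObjPreimageIso x
  obtain ⟨f, hf⟩ := h.map_surjective (iV.hom ≫ β ≫ iW.inv)
  obtain ⟨C, g, d, hT⟩ := distinguished_cocone_triangle f
  have ex1 : ∀ {P : A} (a : P ⟶ h.obj (h.objPreimage w)), a ≫ h.map g = 0 →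
      ∃ (P' : A) (π : P' ⟶ P) (_ : Epi π) (b : P' ⟶ _), π ≫ a = b ≫ h.map f := fun a ha =>
    (h.map_distinguished_exact _ hT).exact_up_to_refinements a ha
  have hfg : f ≫ g = 0 := comp_distTriang_mor_zero₁₂ _ hT
  have hgd : g ≫ d = 0 := comp_distTriang_mor_zero₂₃ _ hT
  have hβg : β ≫ iW.inv ≫ h.map g = 0 := by
    rw [← cancel_epi iV.hom, comp_zero, ← assoc β, ← assoc, ← hf, ← h.map_comp, hfg, h.map_zero]
  have : Epi (ShortComplex.mk β γ wβγ).g := hγ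
  obtain ⟨ι, hι⟩ : ∃ ι : x ⟶ h.obj C, γ ≫ ι = iW.inv ≫ h.map g :=
    ⟨hex.desc _ hβg, hex.g_desc _ hβg⟩
  have hm : Mono ι := by
    refine Preadditive.mono_of_cancel_zero _ fun {P} a ha => ?_
    obtain ⟨P', π, hπ, b, hb⟩ := surjective_up_to_refinements_of_epi γ a
    obtain ⟨P'', π', hπ', c, hc⟩ := ex1 (b ≫ iW.inv) (by
      rw [assoc, ← hι, ← assoc, ← hb, assoc, ha, comp_zero])
    rw [← cancel_epi π, ← cancel_epi π', hb, comp_zero, comp_zero]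
    have : π' ≫ b = c ≫ iV.hom ≫ β := by
      rw [← cancel_mono iW.inv, assoc, hc, hf]; simp
    rw [← assoc, this]; simp [wβγ]
  obtain ⟨k, hk⟩ := h.map_surjective (iX.hom ≫ ι)
  have hm0 : h.map (k ≫ d) = 0 := by
    have : ι ≫ h.map d = 0 := by
      rw [← cancel_epi γ, ← assoc, hι, assoc, ← h.map_comp, hgd]; simp
    rw [h.map_comp, hk, assoc, this, comp_zero]
  obtain ⟨Z, σ, τ, hZ⟩ := distinguished_cocone_triangle₂ (k ≫ d)
  obtain ⟨δ, hδ1, hδ2⟩ := complete_distinguished_triangle_morphism₂ _ _ hZ hT (𝟙 _) k (by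
    change (k ≫ d) ≫ (shiftFunctor T 1).map (𝟙 _) = k ≫ d
    simp)
  change Z ⟶ h.objPreimage w at δ
  change σ ≫ δ = 𝟙 _ ≫ f at hδ1
  change τ ≫ k = δ ≫ g at hδ2
  rw [id_comp] at hδ1
  have hστ : σ ≫ τ = 0 := comp_distTriang_mor_zero₁₂ _ hZ
  have hmono : Mono (h.map σ) := by
    refine (h.map_distinguished_exact _ (inv_rot_of_distTriang _ hZ)).mono_g ?_
    have hs : h.map ((shiftFunctor T (-1 : ℤ)).map (k ≫ d)) = 0 := by
      have := (h.commShiftIso (-1 : ℤ)).hom.naturality (k ≫ d)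
      dsimp at this
      rw [← cancel_mono ((h.commShiftIso (-1 : ℤ)).hom.app _), this, hm0]
      simp
    have hgen : ∀ {a b c : T} (φ : a ⟶ b) (ψ : b ⟶ c), h.map φ = 0 → h.map (-(φ ≫ ψ)) = 0 := by
      intro a b c φ ψ hφ
      rw [h.map_neg, h.map_comp, hφ, zero_comp, neg_zero]
    exact hgen _ _ hs
  have hepi : Epi (h.map τ) :=
    (h.map_distinguished_exact _ (rot_of_distTriang _ hZ)).epi_f hm0
  refine ⟨h.obj Z, iV.inv ≫ h.map σ, h.map τ ≫ iX.hom, h.map δ ≫ iW.hom, ?_, ?_, ?_, ?_⟩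
  · rw [assoc, ← h.map_comp_assoc, hστ]; simp
  · refine { exact := ?_, mono_f := ?_, epi_g := ?_ }
    · refine ShortComplex.exact_of_iso ?_ (h.map_distinguished_exact _ hZ)
      exact ShortComplex.isoMk iV (Iso.refl _) iX
        (by
          change iV.hom ≫ iV.inv ≫ h.map σ = h.map σ ≫ 𝟙 _
          simp)
        (by
          change 𝟙 _ ≫ h.map τ ≫ iX.hom = h.map τ ≫ iX.hom
          simp)
    · dsimp; infer_instance
    · dsimp; infer_instance
  · rw [assoc, ← h.map_comp_assoc, hδ1]
    simp [hf]
  · rw [← cancel_mono ι, assoc, assoc, hι, assoc, ← hk, ← h.map_comp, hδ2, h.map_comp]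
    simp

theorem single_efface_aux {A : Type*} [Category A] [Abelian A] {x : A}
    (X' : HomologicalComplex A (ComplexShape.up ℤ))
    (s : X' ⟶ (HomologicalComplex.single A (ComplexShape.up ℤ) 0).obj x) (hq : QuasiIso s) :
    ∃ (P : A) (p : P ⟶ x) (j : (HomologicalComplex.single A (ComplexShape.up ℤ) 0).obj P ⟶ X'),
      Epi p ∧ (HomologicalComplex.single A (ComplexShape.up ℤ) 0).map p = j ≫ s := by
  let j : (HomologicalComplex.single A (ComplexShape.up ℤ) 0).obj (X'.cycles 0) ⟶ X' :=
    HomologicalComplex.mkHomFromSingle (X'.iCycles 0) (by simp)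
  obtain ⟨p, hp⟩ := (HomologicalComplex.single A (ComplexShape.up ℤ) 0).map_surjective (j ≫ s)
  refine ⟨_, p, j, ?_, hp⟩
  have hc : HomologicalComplex.cyclesMap j 0 =
      (HomologicalComplex.singleObjCyclesSelfIso (ComplexShape.up ℤ) 0 (X'.cycles 0)).hom := by
    rw [← cancel_mono (X'.iCycles 0), HomologicalComplex.cyclesMap_i,
      HomologicalComplex.singleObjCyclesSelfIso_hom, assoc]
    exact congrArg (fun t => HomologicalComplex.iCycles _ 0 ≫ t)
      (HomologicalComplex.mkHomFromSingle_f _ _)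
  have h1 : Epi (HomologicalComplex.homologyMap j 0) := by
    have h2 := HomologicalComplex.homologyπ_naturality j 0
    rw [hc] at h2
    have h3 : Epi (HomologicalComplex.homologyπ _ 0 ≫ HomologicalComplex.homologyMap j 0) := by
      rw [h2]
      exact epi_comp _ _
    exact epi_of_epi (HomologicalComplex.homologyπ _ 0) (HomologicalComplex.homologyMap j 0)
  have h4 : Epi (HomologicalComplex.homologyMap
      ((HomologicalComplex.single A (ComplexShape.up ℤ) 0).map p) 0) := by
    have h5 : HomologicalComplex.homologyMap
      ((HomologicalComplex.single A (ComplexShape.up ℤ) 0).map p) 0 =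
        HomologicalComplex.homologyMap j 0 ≫ HomologicalComplex.homologyMap s 0 := by
      rw [← HomologicalComplex.homologyMap_comp]
      exact congrArg (fun t => HomologicalComplex.homologyMap t 0) hp
    rw [h5]
    exact epi_comp _ _
  have h6 := (HomologicalComplex.homologyFunctorSingleIso A (ComplexShape.up ℤ) 0).hom.naturality p
  have h7 : Epi ((HomologicalComplex.homologyFunctorSingleIso A (ComplexShape.up ℤ) 0).hom.app _ ≫
      (𝟭 A).map p) := by
    rw [← h6]
    have : Epi ((HomologicalComplex.single A (ComplexShape.up ℤ) 0 ⋙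
      HomologicalComplex.homologyFunctor A (ComplexShape.up ℤ) 0).map p) := h4
    exact epi_comp _ _
  exact epi_of_epi ((HomologicalComplex.homologyFunctorSingleIso A
    (ComplexShape.up ℤ) 0).hom.app _) ((𝟭 A).map p)

theorem comp_iso_aux {D : Type*} [Category D] [HasZeroMorphisms D] {a b c d : D}
    (f : a ⟶ b) (e : b ⟶ c) (i : c ≅ d) (hh : f ≫ e ≫ i.hom = 0) : f ≫ e = 0 := by
  rw [← cancel_mono i.hom, assoc, hh, zero_comp]

/-- Effaceability of positive degree `Ext`. -/
theorem ext_efface_aux {A : Type*} [Category A] [Abelian A] [HasExt.{w} A]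
    {x y : A} {n : ℕ} (hn : n ≠ 0) (e : Abelian.Ext x y n) :
    ∃ (P : A) (p : P ⟶ x), Epi p ∧ (Abelian.Ext.mk₀ p).comp e (zero_add n) = 0 := by
  let := HasDerivedCategory.standard A
  let Sx := (CochainComplex.singleFunctor A 0).obj x
  let Sy := (CochainComplex.singleFunctor A 0).obj y
  let f : DerivedCategory.Q.obj Sx ⟶ DerivedCategory.Q.obj (Sy⟦(n : ℤ)⟧) :=
    e.hom ≫ (DerivedCategory.Q.commShiftIso (n : ℤ)).inv.app Sy
  obtain ⟨X', s, hs, g, hf⟩ := DerivedCategory.right_fac f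
  have hq : QuasiIso s := (DerivedCategory.isIso_Q_map_iff_quasiIso _ _).1 hs
  obtain ⟨P, p, j, hpe, hp⟩ := single_efface_aux X' s hq
  change (CochainComplex.singleFunctor A 0).obj P ⟶ X' at j
  change (CochainComplex.singleFunctor A 0).map p = j ≫ s at hp
  refine ⟨P, p, hpe, ?_⟩
  · ext
    rw [Abelian.Ext.comp_hom, Abelian.Ext.mk₀_hom, ShiftedHom.mk₀_comp, Abelian.Ext.zero_hom]
    have hz : j ≫ g = 0 := by
      apply HomologicalComplex.from_single_hom_ext
      apply IsZero.eq_of_tgt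
      exact HomologicalComplex.isZero_single_obj_X (ComplexShape.up ℤ) 0 y _ (by simpa using hn)
    have key : DerivedCategory.Q.map ((CochainComplex.singleFunctor A 0).map p) ≫ f = 0 := by
      rw [hp, hf, Functor.map_comp, assoc, IsIso.hom_inv_id_assoc, ← Functor.map_comp, hz,
        Functor.map_zero]
    exact comp_iso_aux _ _ ((DerivedCategory.Q.commShiftIso (n : ℤ)).symm.app Sy) key

/-- Let `h : 𝒯 ⥤ 𝒜` be a homology theory that reflects isomorphisms, is
full, and is essentially surjective.  Then `𝒜` is hereditary: every two-fold extension
`0 ⟶ u ⟶α v ⟶β w ⟶γ x ⟶ 0` fits in a commutative diagram with exact rows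
`0 ⟶ v ⟶ z ⟶ x ⟶ 0` (top) and `0 ⟶ u ⟶ v ⟶ w ⟶ x ⟶ 0` (bottom), with vertical maps
`id_v`, `z ⟶ w` and `id_x`.  Equivalently, `Ext²_𝒜(x, y) = 0` for all `x, y`. -/
theorem hereditary_of_homology_theory
    {T : Type*} [Category T] [HasZeroObject T] [Preadditive T] [HasShift T ℤ]
    [∀ n : ℤ, (shiftFunctor T n).Additive] [Pretriangulated T]
    {A : Type*} [Category A] [Abelian A] [HasShift A ℤ]
    [∀ n : ℤ, (shiftFunctor A n).Additive] [HasExt.{w} A]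
    (h : T ⥤ A) [h.Additive] [h.CommShift ℤ] [h.IsHomological]
    [h.ReflectsIsomorphisms] [h.Full] [h.EssSurj] :
    (∀ (u v w x : A) (α : u ⟶ v) (β : v ⟶ w) (γ : w ⟶ x),
      Mono α → Epi γ →
      ∀ (wαβ : α ≫ β = 0) (wβγ : β ≫ γ = 0),
        (ShortComplex.mk α β wαβ).Exact → (ShortComplex.mk β γ wβγ).Exact →
        ∃ (z : A) (σ : v ⟶ z) (τ : z ⟶ x) (δ : z ⟶ w) (wστ : σ ≫ τ = 0),
          (ShortComplex.mk σ τ wστ).ShortExact ∧ σ ≫ δ = β ∧ δ ≫ γ = τ) ∧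
    (∀ (x y : A) (e : Abelian.Ext x y 2), e = 0) := by
  refine ⟨fun u v w x α β γ _ hγ _ wβγ _ hex =>
    part_one_aux h v w x β γ hγ wβγ hex, fun x y e => ?_⟩
  obtain ⟨P, p, hp, hpe⟩ := ext_efface_aux two_ne_zero e
  have hS : (ShortComplex.mk (kernel.ι p) p (kernel.condition p)).ShortExact :=
    { exact := ShortComplex.exact_kernel p }
  obtain ⟨e1, rfl⟩ := Abelian.Ext.contravariant_sequence_exact₃ hS y e hpe (n₀ := 1) rfl
  obtain ⟨Q, q, hq, hqe⟩ := ext_efface_aux one_ne_zero e1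
  have w' : (q ≫ kernel.ι p) ≫ p = 0 := by simp
  obtain ⟨z, σ, τ, δ, wστ, hz, h1, h2⟩ := part_one_aux h Q P x (q ≫ kernel.ι p) p hp w' (by
    rw [ShortComplex.exact_iff_exact_up_to_refinements]
    intro B b hb
    obtain ⟨B', π, hπ, c, hc⟩ := surjective_up_to_refinements_of_epi q (kernel.lift p b hb)
    refine ⟨B', π, hπ, c, ?_⟩
    have := congrArg (fun t => t ≫ kernel.ι p) hc
    simpa using this)
  let φ : ShortComplex.mk σ τ wστ ⟶ ShortComplex.mk (kernel.ι p) p (kernel.condition p) :=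
    { τ₁ := q, τ₂ := δ, τ₃ := 𝟙 _, comm₁₂ := h1.symm, comm₂₃ := by simpa using h2 }
  have hnat := ShortComplex.ShortExact.extClass_naturality hz hS φ
  have hnat' : hS.extClass = hz.extClass.comp (Abelian.Ext.mk₀ q) (add_zero 1) := by
    rw [hnat]; exact (Abelian.Ext.mk₀_id_comp _).symm
  rw [hnat', Abelian.Ext.comp_assoc_of_second_deg_zero, hqe, Abelian.Ext.comp_zero]
end

section
/- Let j : 𝒯 → 𝒯' be a triangulated functor (an additive functor commuting with the shifts and sending distinguished triangles to distinguished triangles) between pretriangulated categories. Assume h' : 𝒯' → 𝒜 is a homology theory that reflects isomorphisms, is full, and is essentially surjective (every object of 𝒜 is isomorphic to h'(X') for some X' in 𝒯'). If the homology theory h = h' ∘ j : 𝒯 → 𝒜 also reflects isomorphisms, is full, and is essentially surjective, then j is an equivalence of categories. -/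
open CategoryTheory Category Limits Pretriangulated

/-- The kernel of a full homology theory which reflects isomorphisms squares to zero. -/
lemma comp_eq_zero_of_map_eq_zero
    {T' : Type*} [Category T'] [HasZeroObject T'] [Preadditive T'] [HasShift T' ℤ]
    [∀ n : ℤ, (shiftFunctor T' n).Additive] [Pretriangulated T']
    {A : Type*} [Category A] [Abelian A] [HasShift A ℤ]
    [∀ n : ℤ, (shiftFunctor A n).Additive]
    (h' : T' ⥤ A) [h'.Additive] [h'.CommShift ℤ] [h'.IsHomological]
    [h'.ReflectsIsomorphisms] [h'.Full]
    {X Y Z : T'} (g : X ⟶ Y) (f : Y ⟶ Z) (hg : h'.map g = 0) (hf : h'.map f = 0) :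
    g ≫ f = 0 := by
  obtain ⟨C, i, p, hC⟩ := distinguished_cocone_triangle g
  obtain ⟨E, k, q, hE⟩ := distinguished_cocone_triangle (g ≫ f)
  obtain ⟨c, hc₁, hc₂⟩ := complete_distinguished_triangle_morphism _ _ hC hE (𝟙 X) f
    (id_comp (g ≫ f)).symm
  change C ⟶ E at c
  change i ≫ c = f ≫ k at hc₁
  change p ≫ (𝟙 X)⟦(1 : ℤ)⟧' = c ≫ q at hc₂
  replace hc₂ : p = c ≫ q := by
    rw [← hc₂, CategoryTheory.Functor.map_id]
    exact (comp_id p).symm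
  have hg1 : h'.map (g⟦(1 : ℤ)⟧') = 0 := by
    have := h'.commShiftIso_hom_naturality g (1 : ℤ)
    rw [hg, Functor.map_zero, comp_zero] at this
    rw [← cancel_mono ((h'.commShiftIso (1 : ℤ)).hom.app Y), this, zero_comp]
  have ex₁ := h'.map_distinguished_exact _ (rot_of_distTriang _ hC)
  have ex₂ := h'.map_distinguished_exact _ (rot_of_distTriang _ (rot_of_distTriang _ hC))
  have : Epi (h'.map p) := ex₂.epi_f (by
    change h'.map (-g⟦(1 : ℤ)⟧') = 0
    rw [h'.map_neg, hg1, neg_zero])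
  obtain ⟨s, hs⟩ : ∃ s : h'.obj (X⟦(1 : ℤ)⟧) ⟶ h'.obj E, h'.map p ≫ s = h'.map c := by
    have : Epi ((shortComplexOfDistTriangle _ (rot_of_distTriang _ hC)).map h').g := this
    exact ⟨ex₁.desc (h'.map c) (by
      change h'.map i ≫ h'.map c = 0
      rw [← h'.map_comp, hc₁, h'.map_comp, hf, zero_comp]), ex₁.g_desc _ _⟩
  obtain ⟨S, rfl⟩ := h'.map_surjective s
  have hS : h'.map (S ≫ q) = 𝟙 _ := by
    rw [← cancel_epi (h'.map p), h'.map_comp, reassoc_of% hs, ← h'.map_comp, ← hc₂, comp_id]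
  have : IsIso (h'.map (S ≫ q)) := by rw [hS]; infer_instance
  have : IsIso (S ≫ q) := isIso_of_reflects_iso _ h'
  have hq : q ≫ (g ≫ f)⟦(1 : ℤ)⟧' = 0 := comp_distTriang_mor_zero₃₁ _ hE
  apply (shiftFunctor T' (1 : ℤ)).map_injective
  rw [← cancel_epi (S ≫ q), assoc, hq]
  simp

/-- Let `j : 𝒯 ⥤ 𝒯'` be a triangulated functor between pretriangulated
categories and `h' : 𝒯' ⥤ 𝒜` a homology theory that reflects isomorphisms, is full and is
essentially surjective.  If the homology theory `h = j ⋙ h'` also reflects isomorphisms,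
is full and is essentially surjective, then `j` is an equivalence of categories. -/
theorem equivalence_of_homology_theories
    {T : Type*} [Category T] [HasZeroObject T] [Preadditive T] [HasShift T ℤ]
    [∀ n : ℤ, (shiftFunctor T n).Additive] [Pretriangulated T]
    {T' : Type*} [Category T'] [HasZeroObject T'] [Preadditive T'] [HasShift T' ℤ]
    [∀ n : ℤ, (shiftFunctor T' n).Additive] [Pretriangulated T']
    {A : Type*} [Category A] [Abelian A] [HasShift A ℤ]
    [∀ n : ℤ, (shiftFunctor A n).Additive]
    (j : T ⥤ T') [j.Additive] [j.CommShift ℤ] [j.IsTriangulated]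
    (h' : T' ⥤ A) [h'.Additive] [h'.CommShift ℤ] [h'.IsHomological]
    [h'.ReflectsIsomorphisms] [h'.Full] [h'.EssSurj]
    [(j ⋙ h').ReflectsIsomorphisms] [(j ⋙ h').Full] [(j ⋙ h').EssSurj] :
    j.IsEquivalence := by
  have lift : ∀ {X Y : T} (f : h'.obj (j.obj X) ⟶ h'.obj (j.obj Y)),
      ∃ g : X ⟶ Y, h'.map (j.map g) = f := fun f => (j ⋙ h').map_surjective f
  have ess : ∀ X' : T', ∃ X : T, Nonempty (j.obj X ≅ X') := fun X' => by
    let e : h'.obj (j.obj ((j ⋙ h').objPreimage (h'.obj X'))) ≅ h'.obj X' :=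
      (j ⋙ h').objObjPreimageIso (h'.obj X')
    obtain ⟨φ, hφ⟩ := h'.map_surjective e.hom
    have : IsIso (h'.map φ) := by rw [hφ]; infer_instance
    have : IsIso φ := isIso_of_reflects_iso _ h'
    exact ⟨_, ⟨asIso φ⟩⟩
  have faith : j.Faithful := by
    have key : ∀ {X Y : T} (f : X ⟶ Y), j.map f = 0 → f = 0 := by
      intro X Y f hf
      obtain ⟨C, i, p, hC⟩ := distinguished_cocone_triangle f
      obtain ⟨r, hr⟩ := Triangle.yoneda_exact₂ _ (j.map_distinguished _ hC) (𝟙 (j.obj Y))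
        (by
          change j.map f ≫ _ = 0
          rw [hf, zero_comp])
      change j.obj C ⟶ j.obj Y at r
      change 𝟙 _ = j.map i ≫ r at hr
      obtain ⟨R, hR⟩ := lift (h'.map r)
      have h1 : (j ⋙ h').map (i ≫ R) = 𝟙 _ := by
        rw [Functor.comp_map, j.map_comp, h'.map_comp, hR, ← h'.map_comp, ← hr, h'.map_id]
        rfl
      have : IsIso ((j ⋙ h').map (i ≫ R)) := by rw [h1]; infer_instance
      have : IsIso (i ≫ R) := isIso_of_reflects_iso _ (j ⋙ h')
      have h3 : f ≫ i = 0 := comp_distTriang_mor_zero₁₂ _ hC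
      rw [← cancel_mono (i ≫ R), reassoc_of% h3, zero_comp, zero_comp]
    refine ⟨fun {X Y} f g hfg => ?_⟩
    exact sub_eq_zero.1 (key (f - g) (by rw [j.map_sub, hfg, sub_self]))
  have full : j.Full := by
    have key : ∀ {X Y : T} (f' : j.obj X ⟶ j.obj Y), h'.map f' = 0 → ∃ f, j.map f = f' := by
      intro X Y f' hf'
      obtain ⟨C', i', p', hC'⟩ := distinguished_cocone_triangle f'
      obtain ⟨C, ⟨e⟩⟩ := ess C'
      have hi' : Mono (h'.map i') :=
        (h'.map_distinguished_exact _ hC').mono_g hf'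
      obtain ⟨u, hu⟩ := lift (h'.map (i' ≫ e.inv))
      have h1 : f' ≫ j.map u = 0 := by
        have h2 := comp_eq_zero_of_map_eq_zero h' f' (j.map u - i' ≫ e.inv) hf' (by
          rw [Functor.map_sub, hu, sub_self])
        have h3 : f' ≫ i' = 0 := comp_distTriang_mor_zero₁₂ _ hC'
        rw [Preadditive.comp_sub, reassoc_of% h3, zero_comp, sub_zero] at h2
        exact h2
      obtain ⟨F, f, w, hF⟩ := distinguished_cocone_triangle₁ u
      have hjF := j.map_distinguished _ hF
      obtain ⟨ψ, hψ⟩ := Triangle.coyoneda_exact₂ _ hjF f' h1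
      change j.obj X ⟶ j.obj F at ψ
      change f' = ψ ≫ j.map f at hψ
      have hf : h'.map (j.map f) = 0 := by
        have : Mono (h'.map (j.map u)) := by
          rw [hu, h'.map_comp]; infer_instance
        rw [← cancel_mono (h'.map (j.map u)), zero_comp, ← h'.map_comp, ← j.map_comp]
        have h3 : f ≫ u = 0 := comp_distTriang_mor_zero₁₂ _ hF
        rw [h3, j.map_zero, h'.map_zero]
      obtain ⟨ψ₀, hψ₀⟩ := lift (h'.map ψ)
      have h4 := comp_eq_zero_of_map_eq_zero h' (ψ - j.map ψ₀) (j.map f)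
        (by rw [Functor.map_sub, hψ₀, sub_self]) hf
      rw [Preadditive.sub_comp, sub_eq_zero] at h4
      exact ⟨ψ₀ ≫ f, by rw [j.map_comp, ← h4, hψ]⟩
    refine ⟨fun {X Y} f' => ?_⟩
    obtain ⟨g, hg⟩ := lift (h'.map f')
    obtain ⟨f, hf⟩ := key (f' - j.map g) (by rw [Functor.map_sub, hg, sub_self])
    exact ⟨f + g, by rw [j.map_add, hf, sub_add_cancel]⟩
  exact { faithful := faith, full := full, essSurj := ⟨ess⟩ }
end
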